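/- arXiv:2509.06671 — 3 statements merged into one kernel-verified Lean document; each statement's English description precedes it below -/
import Mathlib

section
/- Let n ≥ 1 and σ ∈ (0,1). Let f ∈ C²(ℝⁿ) be bounded with bounded first and second derivatives, and suppose there exists C₀ > 0 such that whenever ‖x‖ ≤ ‖y‖ one has |f(y)| ≤ C₀ |f(x)| and sup_{|α|=2} |∂^α f(y)| ≤ C₀ sup_{|α|=2} |∂^α f(x)|. Then there exists C > 0 such that for every x with ‖x‖ > 1: |∫_{ℝⁿ} (2f(x) − f(x+y) − f(x−y)) ‖y‖^{−n−2σ} dy| ≤ C ‖x‖^{−n−2σ} ∫_{‖y‖ < 3‖x‖} |f(y)| dy + C |f(x)| ‖x‖^{−2σ} + C ‖x‖^{2−2σ} Σ_{|α|=2} |∂^α f(x/2)|, the integral on the left being absolutely convergent. -/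
open MeasureTheory
open scoped BigOperators

/-- The second partial derivative `∂²f/∂x_i∂x_j (x)`. -/
noncomputable def secondPartial {n : ℕ} (f : EuclideanSpace ℝ (Fin n) → ℝ)
    (x : EuclideanSpace ℝ (Fin n)) (i j : Fin n) : ℝ :=
  fderiv ℝ (fderiv ℝ f) x (EuclideanSpace.single i 1) (EuclideanSpace.single j 1)

/-- `sup_{|α|=2} |∂^α f(x)|`, the supremum of the second partial derivatives at `x`. -/
noncomputable def secondSup {n : ℕ} (f : EuclideanSpace ℝ (Fin n) → ℝ)
    (x : EuclideanSpace ℝ (Fin n)) : ℝ :=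
  ⨆ i : Fin n, ⨆ j : Fin n, |secondPartial f x i j|

abbrev EE (n : ℕ) := EuclideanSpace ℝ (Fin n)

noncomputable def hNear (n : ℕ) (p : ℝ) (y : EE n) : ℝ :=
  (Metric.ball (0 : EE n) (1/2)).indicator (fun y => ‖y‖ ^ p) y

noncomputable def hFar (n : ℕ) (p : ℝ) (y : EE n) : ℝ :=
  (Metric.ball (0 : EE n) (1/2))ᶜ.indicator (fun y => ‖y‖ ^ p) y

lemma hNear_nonneg (n : ℕ) (p : ℝ) (y : EE n) : 0 ≤ hNear n p y :=
  Set.indicator_nonneg (fun _ _ => by positivity) _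

lemma hFar_nonneg (n : ℕ) (p : ℝ) (y : EE n) : 0 ≤ hFar n p y :=
  Set.indicator_nonneg (fun _ _ => by positivity) _

lemma hNear_integrable (n : ℕ) (hn : 1 ≤ n) (p : ℝ) (hp : -(n:ℝ) < p) :
    Integrable (hNear n p) := by
  have hm : MeasurableSet (Metric.ball (0 : EE n) (1/2)) := measurableSet_ball
  have : IntegrableOn (fun y : EE n => ‖y‖ ^ p) (Metric.ball (0 : EE n) (1/2)) := by
    refine integrableOn_ball_of_norm_le_rpow (C := 1) (α := -p) (by simpa using hn) (by simp; linarith) ?_ ?_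
    · refine Filter.Eventually.of_forall fun y => ?_
      simp [abs_of_nonneg (Real.rpow_nonneg (norm_nonneg y) p)]
    · exact (Measurable.aestronglyMeasurable (by fun_prop))
  exact (integrable_indicator_iff hm).2 this

lemma hFar_integrable (n : ℕ) (p : ℝ) (hp : p < -(n:ℝ)) :
    Integrable (hFar n p) := by
  have hm : MeasurableSet (Metric.ball (0 : EE n) (1/2)) := measurableSet_ball
  have h1 : Integrable (fun y : EE n => (1 + ‖y‖) ^ (-(-p))) :=
    integrable_one_add_norm (by simp; linarith)
  rw [neg_neg] at h1
  refine (h1.const_mul ((3:ℝ) ^ (-p))).mono' ?_ ?_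
  · exact ((Measurable.indicator (by fun_prop) hm.compl)).aestronglyMeasurable
  · refine Filter.Eventually.of_forall fun y => ?_
    rw [Real.norm_of_nonneg (hFar_nonneg n p y)]
    unfold hFar
    by_cases hy : y ∈ (Metric.ball (0 : EE n) (1/2))ᶜ
    · rw [Set.indicator_of_mem hy]
      have hy' : 1/2 ≤ ‖y‖ := by simpa using hy
      have h3 : 1 + ‖y‖ ≤ 3 * ‖y‖ := by linarith
      have h4 : (3 * ‖y‖) ^ p ≤ (1 + ‖y‖) ^ p :=
        Real.rpow_le_rpow_of_nonpos (by positivity) h3 (by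
          have : (0:ℝ) ≤ n := by positivity
          linarith)
      rw [Real.mul_rpow (by norm_num) (by positivity)] at h4
      rw [Real.rpow_neg (by norm_num), ← div_eq_inv_mul, le_div_iff₀ (by positivity)]
      linarith
    · rw [Set.indicator_of_notMem hy]; positivity

lemma scale_integral (n : ℕ) (h : EE n → ℝ) (R : ℝ) (hR : 0 < R) (p : ℝ) :
    ∫ y, R ^ p * h (R⁻¹ • y) = R ^ (p + n) * ∫ y, h y := by
  rw [integral_const_mul, Measure.integral_comp_inv_smul_of_nonneg volume h hR.le,
    Real.rpow_add hR]
  simp [mul_assoc]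

lemma scale_near (n : ℕ) (p R : ℝ) (hR : 0 < R) (y : EE n) (hy : ‖y‖ < R / 2) :
    R ^ p * hNear n p (R⁻¹ • y) = ‖y‖ ^ p := by
  have e : ‖R⁻¹ • y‖ = R⁻¹ * ‖y‖ := by rw [norm_smul, Real.norm_of_nonneg (by positivity)]
  have : R⁻¹ • y ∈ Metric.ball (0 : EE n) (1/2) := by
    rw [mem_ball_zero_iff, e, ← div_eq_inv_mul, div_lt_iff₀ hR]; linarith
  rw [hNear, Set.indicator_of_mem this, e, ← Real.mul_rpow hR.le (by positivity)]
  congr 1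
  field_simp

lemma scale_far (n : ℕ) (p R : ℝ) (hR : 0 < R) (y : EE n) (hy : R / 2 ≤ ‖y‖) :
    R ^ p * hFar n p (R⁻¹ • y) = ‖y‖ ^ p := by
  have e : ‖R⁻¹ • y‖ = R⁻¹ * ‖y‖ := by rw [norm_smul, Real.norm_of_nonneg (by positivity)]
  have : R⁻¹ • y ∈ (Metric.ball (0 : EE n) (1/2))ᶜ := by
    rw [Set.mem_compl_iff, mem_ball_zero_iff, e, ← div_eq_inv_mul, div_lt_iff₀ hR]; linarith
  rw [hFar, Set.indicator_of_mem this, e, ← Real.mul_rpow hR.le (by positivity)]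
  congr 1
  field_simp

lemma second_diff_bound {E : Type*} [NormedAddCommGroup E] [NormedSpace ℝ E] (f : E → ℝ) (hf : ContDiff ℝ 2 f) (x y : E) (L : ℝ)
    (hL : ∀ z, ‖z - x‖ ≤ ‖y‖ → ‖fderiv ℝ (fderiv ℝ f) z‖ ≤ L) :
    |2 * f x - f (x + y) - f (x - y)| ≤ 2 * L * ‖y‖ ^ 2 := by
  have hL0 : 0 ≤ L := le_trans (norm_nonneg (fderiv ℝ (fderiv ℝ f) x)) (hL x (by simp))
  have hd : Differentiable ℝ f := hf.differentiable (by norm_num)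
  have hd2 : Differentiable ℝ (fderiv ℝ f) :=
    (hf.fderiv_right (m := 1) (by norm_num)).differentiable (by norm_num)
  have hder : ∀ z : E, HasFDerivAt (fun z => f (x + z) + f (x - z))
      (fderiv ℝ f (x + z) - fderiv ℝ f (x - z)) z := by
    intro z
    have h1 : HasFDerivAt (fun z => f (x + z)) (fderiv ℝ f (x + z)) z := by
      have := (hd (x + z)).hasFDerivAt.comp z ((hasFDerivAt_id z).const_add x)
      rw [ContinuousLinearMap.comp_id] at this
      exact this
    have h2 : HasFDerivAt (fun z => f (x - z)) (-fderiv ℝ f (x - z)) z := by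
      have := (hd (x - z)).hasFDerivAt.comp z ((hasFDerivAt_id z).const_sub x)
      rw [ContinuousLinearMap.comp_neg, ContinuousLinearMap.comp_id] at this
      exact this
    rw [sub_eq_add_neg]
    exact h1.add h2
  have hb : ∀ z ∈ Metric.closedBall (0 : E) ‖y‖,
      ‖fderiv ℝ f (x + z) - fderiv ℝ f (x - z)‖ ≤ 2 * L * ‖y‖ := by
    intro z hz
    have hz' : ‖z‖ ≤ ‖y‖ := by simpa using hz
    have := (convex_closedBall x ‖y‖).norm_image_sub_le_of_norm_fderiv_le (𝕜 := ℝ)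
      (f := fderiv ℝ f) (C := L) (x := x - z) (y := x + z) (fun w _ => hd2 w)
      (fun w hw => hL w (by simpa [dist_eq_norm] using hw))
      (by simpa [dist_eq_norm] using hz') (by simpa [dist_eq_norm] using hz')
    refine this.trans ?_
    have e : x + z - (x - z) = (2:ℝ) • z := by rw [two_smul]; abel
    rw [e, norm_smul]
    simp only [Real.norm_ofNat]
    nlinarith
  have := (convex_closedBall (0 : E) ‖y‖).norm_image_sub_le_of_norm_hasFDerivWithin_le
    (𝕜 := ℝ) (x := 0) (y := y) (fun z _ => (hder z).hasFDerivWithinAt) hb (by simp) (by simp)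
  simp only [add_zero, sub_zero, Real.norm_eq_abs] at this
  rw [abs_sub_comm] at this
  calc _ = |f x + f x - (f (x + y) + f (x - y))| := by congr 1; ring
    _ ≤ _ := this
    _ = _ := by ring

lemma abs_secondPartial_le_sup (n : ℕ) (f : EE n → ℝ) (z : EE n) (i j : Fin n) :
    |secondPartial f z i j| ≤ secondSup f z := by
  refine le_trans ?_ (le_ciSup (f := fun i => ⨆ j : Fin n, |secondPartial f z i j|)
    (Set.finite_range _).bddAbove i)
  exact le_ciSup (f := fun j => |secondPartial f z i j|) (Set.finite_range _).bddAbove j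

lemma norm_second_le (n : ℕ) (f : EE n → ℝ) (z : EE n) (S : ℝ) (hS : 0 ≤ S)
    (h : ∀ i j, |secondPartial f z i j| ≤ S) :
    ‖fderiv ℝ (fderiv ℝ f) z‖ ≤ (n:ℝ) ^ 2 * S := by
  have hx : ∀ u : EE n, u = ∑ i, u i • EuclideanSpace.single i (1:ℝ) := by
    intro u
    simpa using ((EuclideanSpace.basisFun (Fin n) ℝ).sum_repr u).symm
  refine ContinuousLinearMap.opNorm_le_bound _ (by positivity) fun u => ?_
  refine ContinuousLinearMap.opNorm_le_bound _ (by positivity) fun v => ?_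
  have e : fderiv ℝ (fderiv ℝ f) z u v = ∑ i, ∑ j, u i * (v j * secondPartial f z i j) := by
    conv_lhs => rw [hx u, hx v]
    simp only [map_sum, ContinuousLinearMap.sum_apply, map_smul, ContinuousLinearMap.smul_apply,
      smul_eq_mul, secondPartial, Finset.mul_sum]
    try rw [Finset.sum_comm]
    try simp [mul_left_comm]
  rw [e]
  calc ‖∑ i, ∑ j, u i * (v j * secondPartial f z i j)‖
      ≤ ∑ i : Fin n, ∑ j : Fin n, ‖u‖ * (‖v‖ * S) := by
        refine (norm_sum_le _ _).trans (Finset.sum_le_sum fun i _ => ?_)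
        refine (norm_sum_le _ _).trans (Finset.sum_le_sum fun j _ => ?_)
        rw [norm_mul, norm_mul]
        have h1 := PiLp.norm_apply_le u i
        have h2 := PiLp.norm_apply_le v j
        have h3 := h i j
        rw [← Real.norm_eq_abs] at h3
        gcongr
    _ = _ := by simp; ring

lemma secondSup_le_sum (n : ℕ) (hn : 1 ≤ n) (f : EE n → ℝ) (z : EE n) :
    secondSup f z ≤ ∑ i : Fin n, ∑ j : Fin n, |secondPartial f z i j| := by
  haveI : Nonempty (Fin n) := ⟨⟨0, hn⟩⟩
  refine ciSup_le fun i => ciSup_le fun j => ?_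
  refine le_trans ?_ (Finset.single_le_sum (f := fun i => ∑ j : Fin n, |secondPartial f z i j|)
    (fun i _ => Finset.sum_nonneg fun j _ => abs_nonneg _) (Finset.mem_univ i))
  exact Finset.single_le_sum (f := fun j => |secondPartial f z i j|)
    (fun j _ => abs_nonneg _) (Finset.mem_univ j)

/-- Pointwise domination of `f (x + y)` part away from the singularity. -/
lemma far_bound (n : ℕ) (f : EE n → ℝ) (C₀ : ℝ) (hC₀ : 0 < C₀) (p : ℝ) (hp : p ≤ 0)
    (hmono : ∀ x y : EE n, ‖x‖ ≤ ‖y‖ → |f y| ≤ C₀ * |f x|)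
    (x y w : EE n) (hx : 0 < ‖x‖) (hy : ‖x‖ / 2 ≤ ‖y‖) :
    |f w| * ‖y‖ ^ p ≤ (1/2 : ℝ) ^ p * ‖x‖ ^ p *
      (Metric.ball (0 : EE n) (3 * ‖x‖)).indicator (fun y => |f y|) w
      + C₀ * |f x| * ‖y‖ ^ p := by
  have hi : 0 ≤ (Metric.ball (0 : EE n) (3 * ‖x‖)).indicator (fun y => |f y|) w :=
    Set.indicator_nonneg (fun _ _ => abs_nonneg _) _
  by_cases hw : ‖x‖ ≤ ‖w‖
  · have := hmono x w hw
    have h2 : |f w| * ‖y‖ ^ p ≤ C₀ * |f x| * ‖y‖ ^ p := by gcongr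
    have h3 : 0 ≤ (1/2 : ℝ) ^ p * ‖x‖ ^ p *
      (Metric.ball (0 : EE n) (3 * ‖x‖)).indicator (fun y => |f y|) w := by positivity
    linarith
  · have hm : w ∈ Metric.ball (0 : EE n) (3 * ‖x‖) := by
      rw [mem_ball_zero_iff]; linarith
    rw [Set.indicator_of_mem hm]
    have h1 : ‖y‖ ^ p ≤ (1/2 : ℝ) ^ p * ‖x‖ ^ p := by
      rw [← Real.mul_rpow (by norm_num) (by positivity)]
      exact Real.rpow_le_rpow_of_nonpos (by positivity) (by linarith) hp
    have h2 : |f w| * ‖y‖ ^ p ≤ |f w| * ((1/2 : ℝ) ^ p * ‖x‖ ^ p) := by gcongr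
    have h3 : 0 ≤ C₀ * |f x| * ‖y‖ ^ p := by positivity
    linarith

set_option maxHeartbeats 2000000

/-- Pointwise estimate for the singular-integral representation of the fractional
Laplacian `(-Δ)^σ f` (up to a positive constant) of a bounded `C²` function `f` with
bounded derivatives whose size and second derivatives decay monotonically in `‖x‖`. -/
theorem fractional_laplacian_pointwise_estimate
    (n : ℕ) (hn : 1 ≤ n) (σ : ℝ) (hσ : σ ∈ Set.Ioo (0:ℝ) 1)
    (f : EuclideanSpace ℝ (Fin n) → ℝ) (hf : ContDiff ℝ 2 f)
    (hfb : ∃ M, ∀ y, |f y| ≤ M)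
    (hf1b : ∃ M, ∀ y, ‖fderiv ℝ f y‖ ≤ M)
    (hf2b : ∃ M, ∀ y, ‖fderiv ℝ (fderiv ℝ f) y‖ ≤ M)
    (C₀ : ℝ) (hC₀ : 0 < C₀)
    (hmono : ∀ x y : EuclideanSpace ℝ (Fin n), ‖x‖ ≤ ‖y‖ → |f y| ≤ C₀ * |f x|)
    (hmono2 : ∀ x y : EuclideanSpace ℝ (Fin n), ‖x‖ ≤ ‖y‖ → secondSup f y ≤ C₀ * secondSup f x) :
    ∃ C > (0:ℝ), ∀ x : EuclideanSpace ℝ (Fin n), 1 < ‖x‖ →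
      Integrable (fun y : EuclideanSpace ℝ (Fin n) =>
        (2 * f x - f (x + y) - f (x - y)) * ‖y‖ ^ (-(n : ℝ) - 2 * σ)) ∧
      |∫ y : EuclideanSpace ℝ (Fin n),
          (2 * f x - f (x + y) - f (x - y)) * ‖y‖ ^ (-(n : ℝ) - 2 * σ)|
        ≤ C * ‖x‖ ^ (-(n : ℝ) - 2 * σ)
              * (∫ y in Metric.ball (0 : EuclideanSpace ℝ (Fin n)) (3 * ‖x‖), |f y|)
          + C * |f x| * ‖x‖ ^ (-(2:ℝ) * σ)
          + C * ‖x‖ ^ (2 - 2 * σ)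
              * ∑ i : Fin n, ∑ j : Fin n, |secondPartial f ((2:ℝ)⁻¹ • x) i j| := by
  obtain ⟨hσ0, hσ1⟩ := hσ
  have hnR : (1:ℝ) ≤ n := by exact_mod_cast hn
  set q : ℝ := -(n:ℝ) - 2 * σ with hq
  set p : ℝ := q + 2 with hp
  set K1 : ℝ := ∫ y, hNear n p y with hK1
  set K2 : ℝ := ∫ y, hFar n q y with hK2
  have hK1n : 0 ≤ K1 := integral_nonneg (hNear_nonneg n p)
  have hK2n : 0 ≤ K2 := integral_nonneg (hFar_nonneg n q)
  set A : ℝ := 2 * ((n:ℝ)^2 * C₀) with hA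
  have hA0 : 0 ≤ A := by positivity
  set B : ℝ := 2 * (1/2:ℝ) ^ q with hB
  have hB0 : 0 ≤ B := by positivity
  set D : ℝ := 2 + 2 * C₀ with hD
  have hD0 : 0 ≤ D := by positivity
  refine ⟨1 + A * K1 + B + D * K2, by positivity, fun x hx => ?_⟩
  set R := ‖x‖ with hR
  have hR0 : 0 < R := by linarith
  set S := ∑ i : Fin n, ∑ j : Fin n, |secondPartial f ((2:ℝ)⁻¹ • x) i j| with hS
  have hS0 : 0 ≤ S := Finset.sum_nonneg fun i _ => Finset.sum_nonneg fun j _ => abs_nonneg _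
  set g : EE n → ℝ := (Metric.ball (0 : EE n) (3 * R)).indicator (fun y => |f y|) with hg
  have hg0 : ∀ w, 0 ≤ g w := fun w => Set.indicator_nonneg (fun _ _ => abs_nonneg _) _
  have hfc : Continuous f := hf.continuous
  have hgi : Integrable g := by
    refine (integrable_indicator_iff measurableSet_ball).2 ?_
    exact (hfc.abs.continuousOn.integrableOn_compact (isCompact_closedBall 0 (3*R))).mono_set
      Metric.ball_subset_closedBall
  have hgI : ∫ w, g w = ∫ y in Metric.ball (0 : EE n) (3 * R), |f y| :=
    integral_indicator measurableSet_ball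
  set I := ∫ y in Metric.ball (0 : EE n) (3 * R), |f y| with hI
  have hI0 : 0 ≤ I := hgI ▸ integral_nonneg hg0
  -- the dominating function
  set G1 : EE n → ℝ := fun y => A * S * (R ^ p * hNear n p (R⁻¹ • y)) with hG1
  set G2 : EE n → ℝ := fun y => D * |f x| * (R ^ q * hFar n q (R⁻¹ • y)) with hG2
  set G3 : EE n → ℝ := fun y => (1/2:ℝ) ^ q * R ^ q * (g (x + y) + g (x - y)) with hG3
  have hG1i : Integrable G1 :=
    (((hNear_integrable n hn p (by rw [hp, hq]; linarith)).comp_smul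
      (inv_ne_zero hR0.ne')).const_mul _).const_mul _
  have hG2i : Integrable G2 :=
    (((hFar_integrable n q (by rw [hq]; linarith)).comp_smul
      (inv_ne_zero hR0.ne')).const_mul _).const_mul _
  have hg1 : Integrable (fun y => g (x + y)) := hgi.comp_add_left x
  have hg2 : Integrable (fun y => g (x - y)) := hgi.comp_sub_left x
  have hG3i : Integrable G3 := (hg1.add hg2).const_mul _
  have hG10 : ∀ y, 0 ≤ G1 y := fun y => by
    have := hNear_nonneg n p (R⁻¹ • y)
    simp only [hG1]; positivity
  have hG20 : ∀ y, 0 ≤ G2 y := fun y => by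
    have := hFar_nonneg n q (R⁻¹ • y)
    simp only [hG2]; positivity
  have hG30 : ∀ y, 0 ≤ G3 y := fun y => by
    have h1 := hg0 (x + y)
    have h2 := hg0 (x - y)
    simp only [hG3]; positivity
  have hdom : ∀ y, ‖(2 * f x - f (x + y) - f (x - y)) * ‖y‖ ^ q‖ ≤ G1 y + G2 y + G3 y := by
    intro y
    have hyq : 0 ≤ ‖y‖ ^ q := by positivity
    rw [norm_mul, Real.norm_eq_abs, Real.norm_of_nonneg hyq]
    have t1 := hG10 y
    have t2 := hG20 y
    have t3 := hG30 y
    by_cases hy : ‖y‖ < R / 2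
    · have hb := second_diff_bound f hf x y ((n:ℝ)^2 * (C₀ * S)) (by
        intro z hz
        have hzx : ‖(2:ℝ)⁻¹ • x‖ ≤ ‖z‖ := by
          rw [norm_smul, Real.norm_of_nonneg (by norm_num), ← hR]
          have := norm_sub_norm_le x z
          rw [norm_sub_rev] at this
          linarith
        refine norm_second_le n f z _ (by positivity) fun i j => ?_
        refine (abs_secondPartial_le_sup n f z i j).trans ((hmono2 _ _ hzx).trans ?_)
        exact mul_le_mul_of_nonneg_left (secondSup_le_sum n hn f _) hC₀.le)
      have e : G1 y = A * S * ‖y‖ ^ p := by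
        simp only [hG1]; rw [scale_near n p R hR0 y hy]
      suffices |2 * f x - f (x + y) - f (x - y)| * ‖y‖ ^ q ≤ G1 y by linarith
      rw [e]
      by_cases hy0 : y = 0
      · subst hy0
        have : 2 * f x - f (x + 0) - f (x - 0) = 0 := by simp; ring
        rw [this]; simp only [abs_zero, zero_mul]; positivity
      · have hyp : 0 < ‖y‖ := norm_pos_iff.2 hy0
        have e2 : ‖y‖ ^ p = ‖y‖ ^ 2 * ‖y‖ ^ q := by
          rw [hp, Real.rpow_add hyp, mul_comm, Real.rpow_two]
        rw [e2]
        calc _ ≤ (2 * ((n:ℝ)^2 * (C₀ * S)) * ‖y‖ ^ 2) * ‖y‖ ^ q := by gcongr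
          _ = _ := by rw [hA]; ring
    · push Not at hy
      have hq0 : q ≤ 0 := by rw [hq]; linarith
      have b1 := far_bound n f C₀ hC₀ q hq0 hmono x y (x + y) hR0 hy
      have b2 := far_bound n f C₀ hC₀ q hq0 hmono x y (x - y) hR0 hy
      have e : G2 y = D * |f x| * ‖y‖ ^ q := by
        simp only [hG2]; rw [scale_far n q R hR0 y hy]
      have e3 : G3 y = (1/2:ℝ) ^ q * R ^ q * g (x + y) + (1/2:ℝ) ^ q * R ^ q * g (x - y) := by
        simp only [hG3]; ring
      have tri : |2 * f x - f (x + y) - f (x - y)| ≤ 2 * |f x| + |f (x + y)| + |f (x - y)| := by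
        refine (abs_sub _ _).trans ?_
        refine (add_le_add_left (abs_sub _ _) _).trans ?_
        rw [abs_mul]; simp
      have h := mul_le_mul_of_nonneg_right tri hyq
      have e4 : D * |f x| * ‖y‖ ^ q = 2 * |f x| * ‖y‖ ^ q + C₀ * |f x| * ‖y‖ ^ q
        + C₀ * |f x| * ‖y‖ ^ q := by rw [hD]; ring
      rw [add_mul, add_mul] at h
      rw [e, e3, e4]
      linarith
  have hGi : Integrable (fun y => G1 y + G2 y + G3 y) := (hG1i.add hG2i).add hG3i
  have hint : Integrable (fun y : EE n => (2 * f x - f (x + y) - f (x - y)) * ‖y‖ ^ q) := by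
    refine hGi.mono' ?_ (Filter.Eventually.of_forall hdom)
    have hfm : Measurable f := hfc.measurable
    exact Measurable.aestronglyMeasurable (by fun_prop)
  refine ⟨hint, ?_⟩
  have i1 : ∫ y, G1 y = A * S * (R ^ (2 - 2 * σ) * K1) := by
    simp only [hG1]
    rw [integral_const_mul, scale_integral n _ R hR0 p]
    congr 3
    rw [hp, hq]; ring
  have i2 : ∫ y, G2 y = D * |f x| * (R ^ (-(2:ℝ) * σ) * K2) := by
    simp only [hG2]
    rw [integral_const_mul, scale_integral n _ R hR0 q]
    congr 3
    rw [hq]; ring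
  have i3 : ∫ y, G3 y = B * R ^ q * I := by
    simp only [hG3]
    rw [integral_const_mul, integral_add hg1 hg2, integral_add_left_eq_self g x,
      integral_sub_left_eq_self g volume x, hgI, hB]
    ring
  have hle : |∫ y : EE n, (2 * f x - f (x + y) - f (x - y)) * ‖y‖ ^ q| ≤
      A * S * (R ^ (2 - 2 * σ) * K1) + D * |f x| * (R ^ (-(2:ℝ) * σ) * K2) + B * R ^ q * I := by
    rw [← i1, ← i2, ← i3]
    have h12 : Integrable (fun y => G1 y + G2 y) := hG1i.add hG2i
    rw [← integral_add hG1i hG2i, ← integral_add h12 hG3i]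
    exact norm_integral_le_of_norm_le hGi (Filter.Eventually.of_forall hdom)
  refine hle.trans ?_
  have c1 : B ≤ 1 + A * K1 + B + D * K2 := by nlinarith [mul_nonneg hA0 hK1n, mul_nonneg hD0 hK2n]
  have c2 : D * K2 ≤ 1 + A * K1 + B + D * K2 := by nlinarith [mul_nonneg hA0 hK1n]
  have c3 : A * K1 ≤ 1 + A * K1 + B + D * K2 := by nlinarith [mul_nonneg hD0 hK2n]
  have d1 : B * R ^ q * I ≤ (1 + A * K1 + B + D * K2) * R ^ q * I := by gcongr
  have d2 : D * |f x| * (R ^ (-(2:ℝ) * σ) * K2) ≤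
      (1 + A * K1 + B + D * K2) * |f x| * R ^ (-(2:ℝ) * σ) := by
    calc _ = (D * K2) * |f x| * R ^ (-(2:ℝ) * σ) := by ring
      _ ≤ _ := by gcongr
  have d3 : A * S * (R ^ (2 - 2 * σ) * K1) ≤
      (1 + A * K1 + B + D * K2) * R ^ (2 - 2 * σ) * S := by
    calc _ = (A * K1) * R ^ (2 - 2 * σ) * S := by ring
      _ ≤ _ := by gcongr
  linarith
end

section
/- Let n ≥ 1, s ∈ (0,1) and a > n, and let g : ℝⁿ → ℝ be given by g(x) = (1 + ‖x‖²)^{−a/2}. Then there exists a constant C > 0 such that for every x ∈ ℝⁿ: |∫_{ℝⁿ} (2g(x) − g(x+y) − g(x−y)) ‖y‖^{−n−2s} dy| ≤ C (1 + ‖x‖²)^{−(n+2s)/2}, the integral being absolutely convergent. -/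
open MeasureTheory

lemma fl_scalar (b : ℝ) (hb : 0 < b) :
    ∃ M : ℝ, 0 ≤ M ∧ ∀ v : ℝ, |v| ≤ 3/4 → |(1+v)^(-b) - 1 + b * v| ≤ M * v^2 := by
  have h1 : ∀ p : ℝ, ∀ w ∈ Set.Icc (-(3/4):ℝ) (3/4),
      HasDerivAt (fun v : ℝ => (1+v)^p) (p * (1+w)^(p-1)) w := by
    intro p w hw
    have h0 : HasDerivAt (fun v : ℝ => 1 + v) 1 w := (hasDerivAt_id w).const_add 1
    have := h0.rpow_const (p := p) (Or.inl (by have := hw.1; linarith))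
    simpa using this
  set K : ℝ := (1/4:ℝ)^(-b-2) with hK
  have hKnn : 0 ≤ K := by positivity
  refine ⟨b * ((b+1) * K), by positivity, ?_⟩
  have h2 : ∀ w ∈ Set.Icc (-(3/4):ℝ) (3/4), |(1+w)^(-b-1) - 1| ≤ (b+1) * K * |w| := by
    intro w hw
    have := Convex.norm_image_sub_le_of_norm_hasDerivWithin_le
      (f := fun v : ℝ => (1+v)^(-b-1)) (f' := fun w => (-b-1) * (1+w)^(-b-1-1))
      (s := Set.Icc (-(3/4):ℝ) (3/4)) (C := (b+1)*K) (x := 0) (y := w)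
      (fun z hz => (h1 _ z hz).hasDerivWithinAt) ?_ (convex_Icc _ _) (by constructor <;> norm_num) hw
    · simpa using this
    · intro z hz
      have hz1 := hz.1
      rw [Real.norm_eq_abs, abs_mul, abs_of_neg (by linarith : -b-1 < 0),
        abs_of_nonneg (Real.rpow_nonneg (by linarith) _)]
      have : (1+z)^(-b-1-1) ≤ K := by
        rw [hK, show -b-1-1 = -b-2 by ring]
        exact Real.rpow_le_rpow_of_nonpos (by norm_num) (by linarith) (by linarith)
      have : (b+1) * (1+z)^(-b-1-1) ≤ (b+1) * K := mul_le_mul_of_nonneg_left this (by linarith)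
      linarith
  intro v hv
  have hv' : |v| ≤ 3/4 := hv
  have hsub : ∀ z ∈ Set.Icc (-|v|) |v|, z ∈ Set.Icc (-(3/4):ℝ) (3/4) :=
    fun z hz => ⟨by linarith [hz.1], by linarith [hz.2]⟩
  have := Convex.norm_image_sub_le_of_norm_hasDerivWithin_le
      (f := fun v : ℝ => (1+v)^(-b) + b * v) (f' := fun w => (-b) * (1+w)^(-b-1) + b * 1)
      (s := Set.Icc (-|v|) |v|) (C := b * ((b+1)*K) * |v|) (x := 0) (y := v)
      (fun z hz => ((h1 _ z (hsub z hz)).add ((hasDerivAt_id z).const_mul b)).hasDerivWithinAt)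
      ?_ (convex_Icc _ _) (by constructor <;> simp) ⟨neg_abs_le v, le_abs_self v⟩
  · have h3 : b * ((b+1)*K) * |v| * |v| = b * ((b+1)*K) * v^2 := by
      rw [mul_assoc, abs_mul_abs_self]; ring
    simp only [Real.norm_eq_abs, add_zero, Real.one_rpow, mul_zero, sub_zero] at this
    rw [h3] at this
    convert this using 2
    ring
  · intro z hz
    have hzv : |z| ≤ |v| := abs_le.2 hz
    rw [Real.norm_eq_abs, show -b * (1+z)^(-b-1) + b * 1 = -b * ((1+z)^(-b-1) - 1) by ring,
      abs_mul, abs_neg, abs_of_pos hb, mul_assoc]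
    refine mul_le_mul_of_nonneg_left ((h2 z (hsub z hz)).trans ?_) hb.le
    exact mul_le_mul_of_nonneg_left hzv (by positivity)

lemma fl_kernel (n : ℕ) (hn : 1 ≤ n) (s : ℝ) (hs : s ∈ Set.Ioo (0:ℝ) 1) :
    Integrable (fun z : EuclideanSpace ℝ (Fin n) =>
      min (‖z‖^2) 1 * ‖z‖ ^ (-(n : ℝ) - 2 * s)) := by
  obtain ⟨hs0, hs1⟩ := hs
  have hm : AEStronglyMeasurable (fun z : EuclideanSpace ℝ (Fin n) =>
      min (‖z‖^2) 1 * ‖z‖ ^ (-(n : ℝ) - 2 * s)) volume :=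
    Measurable.aestronglyMeasurable (by fun_prop)
  have hfr : Module.finrank ℝ (EuclideanSpace ℝ (Fin n)) = n := by simp
  have hin : IntegrableOn (fun z : EuclideanSpace ℝ (Fin n) =>
      min (‖z‖^2) 1 * ‖z‖ ^ (-(n : ℝ) - 2 * s)) (Metric.ball 0 1) := by
    refine integrableOn_ball_of_norm_le_rpow (C := 1) (α := n + 2 * s - 2)
      (by rw [hfr]; exact hn) (by rw [hfr]; linarith) (Filter.Eventually.of_forall ?_) hm
    intro z
    rw [Real.norm_eq_abs, abs_of_nonneg (by positivity), one_mul]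
    rcases eq_or_ne z 0 with rfl | hz
    · simp; positivity
    · have hz' : 0 < ‖z‖ := norm_pos_iff.2 hz
      calc min (‖z‖^2) 1 * ‖z‖ ^ (-(n : ℝ) - 2 * s) ≤ ‖z‖^2 * ‖z‖ ^ (-(n : ℝ) - 2 * s) := by
            gcongr; exact min_le_left _ _
        _ = ‖z‖ ^ (-((n:ℝ) + 2 * s - 2)) := by
            rw [← Real.rpow_natCast, ← Real.rpow_add hz']; congr 1; push_cast; ring
  have hout : IntegrableOn (fun z : EuclideanSpace ℝ (Fin n) =>
      min (‖z‖^2) 1 * ‖z‖ ^ (-(n : ℝ) - 2 * s)) (Metric.ball 0 1)ᶜ := by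
    have hI : Integrable (fun z : EuclideanSpace ℝ (Fin n) => (1 + ‖z‖) ^ (-((n:ℝ) + 2 * s))) :=
      integrable_one_add_norm (by rw [hfr]; linarith)
    refine Integrable.mono' ((hI.const_mul ((2:ℝ)^((n:ℝ) + 2 * s))).integrableOn) hm.restrict ?_
    refine (ae_restrict_iff' Metric.isOpen_ball.measurableSet.compl).2
      (Filter.Eventually.of_forall ?_)
    intro z hz
    have hz1 : 1 ≤ ‖z‖ := by simpa using hz
    rw [Real.norm_eq_abs, abs_of_nonneg (by positivity)]
    calc min (‖z‖^2) 1 * ‖z‖ ^ (-(n : ℝ) - 2 * s) ≤ 1 * ‖z‖ ^ (-(n : ℝ) - 2 * s) := by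
          gcongr; exact min_le_right _ _
      _ ≤ ((1 + ‖z‖)/2) ^ (-(n : ℝ) - 2 * s) := by
          rw [one_mul]
          exact Real.rpow_le_rpow_of_nonpos (by positivity) (by linarith)
            (by have : (0:ℝ) ≤ n := by positivity
                linarith)
      _ = _ := by
          rw [Real.div_rpow (by positivity) (by norm_num), div_eq_mul_inv,
            ← Real.rpow_neg (by norm_num), mul_comm]
          congr 2 <;> ring
  have := hin.union hout
  rwa [Set.union_compl_self, integrableOn_univ] at this

set_option maxHeartbeats 1000000 in
lemma fl_ptwise (n : ℕ) (d a : ℝ) (hd : 0 < d) (ha : 0 < a) :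
    ∃ C : ℝ, 0 < C ∧ ∀ (x y : EuclideanSpace ℝ (Fin n)) (R : ℝ), 0 < R → R^2 = 1 + ‖x‖^2 →
      |2 * (1 + ‖x‖^2)^(-a/2) - (1 + ‖x+y‖^2)^(-a/2) - (1 + ‖x-y‖^2)^(-a/2)| * ‖y‖ ^ (-d) ≤
      C * R^(-d) * (R^(-a) * (min (‖R⁻¹ • y‖^2) 1 * ‖R⁻¹ • y‖ ^ (-d))
        + ((1 + ‖x+y‖^2)^(-a/2) + (1 + ‖x-y‖^2)^(-a/2))) := by
  obtain ⟨M, hM, hMb⟩ := fl_scalar (a/2) (by positivity)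
  refine ⟨32 + (4:ℝ)^d + a + 18 * M, by positivity, ?_⟩
  intro x y R hR hRx
  set C := 32 + (4:ℝ)^d + a + 18 * M with hC
  have h4 : (0:ℝ) < 4^d := by positivity
  have hgx : (1 + ‖x‖^2)^(-a/2) = R^(-a) := by
    rw [← hRx, ← Real.rpow_natCast, ← Real.rpow_mul hR.le]; congr 1; push_cast; ring
  have hnorm : ‖R⁻¹ • y‖ = R⁻¹ * ‖y‖ := by
    rw [norm_smul, Real.norm_eq_abs, abs_of_pos (inv_pos.2 hR)]
  set t := ‖R⁻¹ • y‖ with ht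
  have ht0 : 0 ≤ t := norm_nonneg _
  have hy : ‖y‖ = R * t := by rw [hnorm]; field_simp
  have hyd : ‖y‖^(-d) = R^(-d) * t^(-d) := by rw [hy, Real.mul_rpow hR.le ht0]
  have hA : 0 ≤ (1 + ‖x+y‖^2)^(-a/2) := by positivity
  have hB : 0 ≤ (1 + ‖x-y‖^2)^(-a/2) := by positivity
  have hRd : 0 < R^(-d) := by positivity
  have hRa : 0 < R^(-a) := by positivity
  have htd : 0 ≤ t^(-d) := by positivity
  rw [hyd, hgx]
  rcases le_or_gt t (1/4) with h | h
  · have hxR : ‖x‖ ≤ R := by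
      refine abs_le_of_sq_le_sq' ?_ hR.le |>.2
      rw [hRx]; linarith
    have ht2 : t^2 ≤ t/4 := by rw [sq]; nlinarith
    have ht2' : 0 ≤ t^2 := sq_nonneg t
    set q := 2 * inner ℝ x y / R^2 with hq
    have hqt : |q| ≤ 2 * t := by
      rw [hq, abs_div, abs_of_pos (by positivity : 0 < R^2), div_le_iff₀ (by positivity), abs_mul,
        abs_of_pos (by norm_num : (0:ℝ) < 2)]
      have h1 := abs_real_inner_le_norm x y
      have h2 : ‖x‖ * ‖y‖ ≤ R * ‖y‖ := by gcongr
      rw [hy] at h1 h2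
      nlinarith
    have hplus : (1 + ‖x+y‖^2)^(-a/2) = R^(-a) * (1 + (t^2 + q))^(-(a/2)) := by
      have : 1 + ‖x+y‖^2 = R^2 * (1 + (t^2 + q)) := by
        rw [norm_add_sq_real, hq, hy]; field_simp; rw [hRx]; ring
      have hpos : 0 ≤ 1 + (t^2+q) := by linarith [(abs_le.1 hqt).1, (abs_le.1 hqt).2]
      rw [this, Real.mul_rpow (by positivity) hpos, hRx, hgx]; congr 2; ring
    have hminus : (1 + ‖x-y‖^2)^(-a/2) = R^(-a) * (1 + (t^2 - q))^(-(a/2)) := by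
      have : 1 + ‖x-y‖^2 = R^2 * (1 + (t^2 - q)) := by
        rw [norm_sub_sq_real, hq, hy]; field_simp; rw [hRx]; ring
      have hpos : 0 ≤ 1 + (t^2-q) := by linarith [(abs_le.1 hqt).1, (abs_le.1 hqt).2]
      rw [this, Real.mul_rpow (by positivity) hpos, hRx, hgx]; congr 2; ring
    have hq' := abs_le.1 hqt
    have hp3 : |t^2 + q| ≤ 3 * t := abs_le.2 ⟨by linarith [hq'.1, hq'.2], by linarith [hq'.1, hq'.2]⟩
    have hm3 : |t^2 - q| ≤ 3 * t := abs_le.2 ⟨by linarith [hq'.1, hq'.2], by linarith [hq'.1, hq'.2]⟩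
    have hp := hMb _ (hp3.trans (by linarith))
    have hm := hMb _ (hm3.trans (by linarith))
    have hp9 : (t^2+q)^2 ≤ 9 * t^2 := by
      rw [← sq_abs, show 9 * t^2 = (3*t)^2 by ring]
      exact pow_le_pow_left₀ (abs_nonneg _) hp3 2
    have hm9 : (t^2-q)^2 ≤ 9 * t^2 := by
      rw [← sq_abs, show 9 * t^2 = (3*t)^2 by ring]
      exact pow_le_pow_left₀ (abs_nonneg _) hm3 2
    have hp9' := mul_le_mul_of_nonneg_left hp9 hM
    have hm9' := mul_le_mul_of_nonneg_left hm9 hM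
    have hmin : min (t^2) 1 = t^2 := min_eq_left (by linarith)
    have key : |2 - (1 + (t^2 + q))^(-(a/2)) - (1 + (t^2 - q))^(-(a/2))| ≤ C * t^2 := by
      have h1 := abs_le.1 hp
      have h2 := abs_le.1 hm
      have h3 : (a + 18 * M) * t^2 ≤ C * t^2 :=
        mul_le_mul_of_nonneg_right (by rw [hC]; linarith) (sq_nonneg t)
      have h5 : 0 ≤ a * t^2 := by positivity
      have h6 : a/2 * (t^2+q) + a/2 * (t^2-q) = a * t^2 := by ring
      have h7 : (a + 18 * M) * t^2 = a * t^2 + M * (9 * t^2) + M * (9 * t^2) := by ring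
      obtain ⟨h1a, h1b⟩ := h1
      obtain ⟨h2a, h2b⟩ := h2
      apply abs_le.2
      constructor <;> linarith
    have hS : 0 ≤ (1 + ‖x+y‖^2)^(-a/2) + (1 + ‖x-y‖^2)^(-a/2) := by positivity
    calc |2 * R^(-a) - (1 + ‖x+y‖^2)^(-a/2) - (1 + ‖x-y‖^2)^(-a/2)| * (R^(-d) * t^(-d))
        = R^(-a) * |2 - (1 + (t^2 + q))^(-(a/2)) - (1 + (t^2 - q))^(-(a/2))|
            * (R^(-d) * t^(-d)) := by
          rw [hplus, hminus, ← abs_of_pos hRa, ← abs_mul, abs_of_pos hRa]; congr 2; ring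
      _ ≤ R^(-a) * (C * t^2) * (R^(-d) * t^(-d)) := by gcongr
      _ = C * R^(-d) * (R^(-a) * (min (t^2) 1 * t^(-d)) + 0) := by rw [hmin]; ring
      _ ≤ _ := by gcongr
  · have htd4 : t^(-d) ≤ 4^d := by
      have := Real.rpow_le_rpow_of_nonpos (by norm_num) h.le (by linarith : -d ≤ 0)
      refine this.trans (le_of_eq ?_)
      rw [one_div, Real.inv_rpow (by norm_num), Real.rpow_neg (by norm_num), inv_inv]
    have hmin : 1/16 ≤ min (t^2) 1 := le_min (by nlinarith) (by norm_num)
    set A := (1 + ‖x+y‖^2)^(-a/2)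
    set B := (1 + ‖x-y‖^2)^(-a/2)
    have habs : |2 * R^(-a) - A - B| ≤ 2 * R^(-a) + (A + B) := by
      apply abs_le.2; constructor <;> linarith
    calc |2 * R^(-a) - A - B| * (R^(-d) * t^(-d)) ≤
          (2 * R^(-a) + (A + B)) * (R^(-d) * t^(-d)) := by gcongr
      _ = R^(-d) * (R^(-a) * (2 * t^(-d)) + t^(-d) * (A + B)) := by ring
      _ ≤ R^(-d) * (R^(-a) * ((C * min (t^2) 1) * t^(-d)) + C * (A + B)) := by
          gcongr
          · have : 32 ≤ C := by rw [hC]; linarith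
            nlinarith
          · refine htd4.trans ?_
            rw [hC]; linarith
      _ = _ := by ring

/-- Pointwise bound `|(-Δ)^s ⟨·⟩^{-a}(x)| ≲ ⟨x⟩^{-n-2s}` for the singular-integral
representation of the fractional Laplacian applied to `g(x) = (1+‖x‖²)^{-a/2}`, `a > n`. -/
theorem fractional_laplacian_japanese_bracket_bound
    (n : ℕ) (hn : 1 ≤ n) (s a : ℝ) (hs : s ∈ Set.Ioo (0:ℝ) 1) (ha : (n : ℝ) < a)
    (g : EuclideanSpace ℝ (Fin n) → ℝ)
    (hg : ∀ x, g x = (1 + ‖x‖ ^ 2) ^ (-a / 2)) :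
    ∃ C > (0:ℝ), ∀ x : EuclideanSpace ℝ (Fin n),
      Integrable (fun y : EuclideanSpace ℝ (Fin n) =>
        (2 * g x - g (x + y) - g (x - y)) * ‖y‖ ^ (-(n : ℝ) - 2 * s)) ∧
      |∫ y : EuclideanSpace ℝ (Fin n),
          (2 * g x - g (x + y) - g (x - y)) * ‖y‖ ^ (-(n : ℝ) - 2 * s)|
        ≤ C * (1 + ‖x‖ ^ 2) ^ (-((n : ℝ) + 2 * s) / 2) := by
  have hk := fl_kernel n hn s hs
  have hn0 : (0:ℝ) ≤ n := by positivity
  have hs0 := hs.1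
  obtain ⟨C, hC, hpt⟩ := fl_ptwise n ((n:ℝ) + 2 * s) a (by linarith) (by linarith)
  have hexp : -((n:ℝ) + 2 * s) = -(n:ℝ) - 2 * s := by ring
  rw [hexp] at hpt ⊢
  simp only [← hg] at hpt
  have hgm : Measurable g := by
    rw [show g = fun x => (1 + ‖x‖ ^ 2) ^ (-a / 2) from funext hg]; fun_prop
  have hgi : Integrable g := by
    rw [show g = fun x => (1 + ‖x‖ ^ 2) ^ (-a / 2) from funext hg]
    exact integrable_rpow_neg_one_add_norm_sq (by simpa using ha)
  have hg0 : ∀ x, 0 ≤ g x := fun x => by rw [hg]; positivity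
  set k : EuclideanSpace ℝ (Fin n) → ℝ :=
    fun z => min (‖z‖^2) 1 * ‖z‖ ^ (-(n : ℝ) - 2 * s) with hkdef
  have hk0 : 0 ≤ ∫ z, k z := integral_nonneg fun z => by
    simp only [hkdef, Pi.zero_apply]; positivity
  have hgI0 : 0 ≤ ∫ z, g z := integral_nonneg hg0
  refine ⟨C * ((∫ z, k z) + 2 * (∫ z, g z) + 1), by positivity, ?_⟩
  intro x
  set R := Real.sqrt (1 + ‖x‖^2) with hRdef
  have hRsq : R^2 = 1 + ‖x‖^2 := Real.sq_sqrt (by positivity)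
  have hR : 0 < R := Real.sqrt_pos.2 (by positivity)
  have hR1 : 1 ≤ R := Real.one_le_sqrt.2 (by nlinarith [norm_nonneg x])
  have hRd : (1 + ‖x‖ ^ 2) ^ ((-(n : ℝ) - 2 * s) / 2) = R^(-(n : ℝ) - 2 * s) := by
    rw [← hRsq, ← Real.rpow_natCast, ← Real.rpow_mul hR.le]; congr 1; push_cast; ring
  have i1 : Integrable (fun y => R^(-a) * k (R⁻¹ • y)) :=
    (hk.comp_smul (inv_ne_zero hR.ne')).const_mul _
  have i2 : Integrable (fun y => g (x + y)) := hgi.comp_add_left x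
  have i3 : Integrable (fun y => g (x - y)) := hgi.comp_sub_left x
  have hF : Integrable (fun y => C * R^(-(n : ℝ) - 2 * s) *
      (R^(-a) * k (R⁻¹ • y) + (g (x + y) + g (x - y)))) := (i1.add (i2.add i3)).const_mul _
  have hb : ∀ y, ‖(2 * g x - g (x + y) - g (x - y)) * ‖y‖ ^ (-(n : ℝ) - 2 * s)‖ ≤
      C * R^(-(n : ℝ) - 2 * s) * (R^(-a) * k (R⁻¹ • y) + (g (x + y) + g (x - y))) := by
    intro y
    rw [Real.norm_eq_abs, abs_mul, abs_of_nonneg (by positivity : 0 ≤ ‖y‖ ^ (-(n : ℝ) - 2 * s))]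
    exact hpt x y R hR hRsq
  refine ⟨Integrable.mono' hF (Measurable.aestronglyMeasurable (by fun_prop))
    (Filter.Eventually.of_forall hb), ?_⟩
  refine (norm_integral_le_of_norm_le hF (Filter.Eventually.of_forall hb)).trans ?_
  have i4 : Integrable (fun y => g (x + y) + g (x - y)) := i2.add i3
  rw [integral_const_mul, integral_add i1 i4, integral_add i2 i3, integral_const_mul,
    Measure.integral_comp_inv_smul_of_nonneg _ _ hR.le, integral_add_left_eq_self g x,
    integral_sub_left_eq_self g volume x, hRd]
  have hRn : R^(-a) * (R^n) ≤ 1 := by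
    rw [← Real.rpow_natCast, ← Real.rpow_add hR]
    exact Real.rpow_le_one_of_one_le_of_nonpos hR1 (by linarith)
  have : R^(-a) * (R^n * ∫ z, k z) ≤ ∫ z, k z := by nlinarith
  simp only [finrank_euclideanSpace, Fintype.card_fin, smul_eq_mul]
  calc C * R^(-(n : ℝ) - 2 * s) * (R^(-a) * (R^n * ∫ z, k z) + ((∫ z, g z) + ∫ z, g z))
      ≤ C * R^(-(n : ℝ) - 2 * s) * ((∫ z, k z) + 2 * (∫ z, g z) + 1) := by
        refine mul_le_mul_of_nonneg_left (by linarith) (by positivity)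
    _ = _ := by ring
end

section
/- Let n ≥ 1, q > n, and let σ > 0 be a non-integer with integer part m = ⌊σ⌋ and fractional part s = σ − m ∈ (0,1). Let F : ℝⁿ → ℝ be defined by F = (−Δ)^m ⟨·⟩^{−q}, i.e. the m-fold iterated negative Laplacian of x ↦ (1 + ‖x‖²)^{−q/2}. Then there exists a constant C > 0 such that for every x ∈ ℝⁿ: |∫_{ℝⁿ} (2F(x) − F(x+y) − F(x−y)) ‖y‖^{−n−2s} dy| ≤ C (1 + ‖x‖²)^{−(n+2s)/2}, the integral being absolutely convergent. -/
open MeasureTheory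
open scoped BigOperators

/-- The negative Laplacian `(-Δ)f(x) = -∑_{j=1}^n ∂²f/∂x_j²(x)` as an operator on
functions on `ℝⁿ`. -/
noncomputable def negLap {n : ℕ} :
    (EuclideanSpace ℝ (Fin n) → ℝ) → (EuclideanSpace ℝ (Fin n) → ℝ) :=
  fun f x =>
    -∑ j : Fin n,
      fderiv ℝ (fderiv ℝ f) x (EuclideanSpace.single j 1) (EuclideanSpace.single j 1)


section aux
open Set
variable {n : ℕ}

/-- power of the squared Japanese bracket -/
noncomputable def jb (n : ℕ) (p : ℝ) : EuclideanSpace ℝ (Fin n) → ℝ :=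
  fun y => (1 + ‖y‖ ^ 2) ^ p

lemma jb_hasFDerivAt (p : ℝ) (x : EuclideanSpace ℝ (Fin n)) :
    HasFDerivAt (jb n p) ((2 * p * jb n (p - 1) x) • innerSL ℝ x) x := by
  have h1 : HasFDerivAt (fun y : EuclideanSpace ℝ (Fin n) => 1 + ‖y‖ ^ 2)
      (2 • innerSL ℝ x) x := by
    simpa using ((hasStrictFDerivAt_norm_sq x).hasFDerivAt).const_add 1
  have h2 := h1.rpow_const (p := p) (Or.inl (by positivity))
  refine h2.congr_fderiv ?_
  ext v
  simp [jb]
  ring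

lemma jb_contDiff (p : ℝ) : ContDiff ℝ 2 (jb n p) := by
  unfold jb
  refine ContDiff.rpow_const_of_ne (contDiff_const.add (contDiff_norm_sq ℝ)) (fun x => by positivity)

lemma jb_fderiv (p : ℝ) :
    fderiv ℝ (jb n p) = fun x => (2 * p * jb n (p - 1) x) • innerSL ℝ x := by
  ext1 x
  exact (jb_hasFDerivAt p x).fderiv

lemma jb_mul (p : ℝ) (x : EuclideanSpace ℝ (Fin n)) :
    jb n (p - 1) x * ‖x‖ ^ 2 = jb n p x - jb n (p - 1) x := by
  have : jb n p x = jb n (p - 1) x * (1 + ‖x‖ ^ 2) := by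
    unfold jb
    rw [← Real.rpow_add_one (by positivity)]
    congr 1
    ring
  rw [this]
  ring

lemma jb_negLap (p : ℝ) :
    negLap (jb n p) = (-(2 * p * n + 4 * p * (p - 1))) • jb n (p - 1)
      + (4 * p * (p - 1)) • jb n (p - 2) := by
  ext x
  set B : EuclideanSpace ℝ (Fin n) →L[ℝ] EuclideanSpace ℝ (Fin n) →L[ℝ] ℝ :=
    LinearMap.mkContinuous₂ (innerₗ _) 1 (fun x y => by
      simpa using abs_real_inner_le_norm x y) with hB
  have hBx : ∀ x, innerSL ℝ x = B x := fun x => by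
    ext y
    simp [hB]
  have hBB : ∀ x y, B x y = inner ℝ x y := fun x y => by simp [hB]
  simp only [negLap, jb_fderiv, hBx]
  have h2 : HasFDerivAt (fun x => (2 * p * jb n (p - 1) x) • B x)
      (((2 * p * jb n (p - 1) x) • B) +
        ((2 * p) • ((2 * (p - 1) * jb n (p - 1 - 1) x) • innerSL ℝ x)).smulRight (B x)) x :=
    ((jb_hasFDerivAt (p - 1) x).const_mul (2 * p)).smul
      B.hasFDerivAt
  have e : p - 1 - 1 = p - 2 := by ring
  have h3 := jb_mul (p - 1) x
  rw [e] at h2 h3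
  rw [h2.fderiv]
  simp only [ContinuousLinearMap.add_apply, ContinuousLinearMap.smul_apply,
    ContinuousLinearMap.smulRight_apply, innerSL_apply_apply, hBB, smul_eq_mul, Finset.sum_add_distrib,
    Pi.add_apply, Pi.smul_apply, EuclideanSpace.inner_single_right]
  have h4 : ‖x‖ ^ 2 = ∑ j, x j * x j := by
    rw [EuclideanSpace.real_norm_sq_eq]
    simp [sq]
  have h5 : ∑ j : Fin n, 2 * p * (2 * (p - 1) * jb n (p - 2) x * (1 * (starRingEnd ℝ) (x.ofLp j))) *
         (1 * (starRingEnd ℝ) (x.ofLp j)) = 4 * p * (p - 1) * (jb n (p - 2) x * ‖x‖ ^ 2) := by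
    rw [h4, Finset.mul_sum, Finset.mul_sum]
    refine Finset.sum_congr rfl fun j _ => ?_
    simp
    ring
  rw [h5, h3]
  simp
  ring

/-- span of the admissible brackets -/
noncomputable def jbSpan (n : ℕ) (b : ℝ) : Submodule ℝ (EuclideanSpace ℝ (Fin n) → ℝ) :=
  Submodule.span ℝ {f | ∃ p ≤ b, f = jb n p}

lemma negLap_add {f g : EuclideanSpace ℝ (Fin n) → ℝ} (hf : ContDiff ℝ 2 f)
    (hg : ContDiff ℝ 2 g) : negLap (f + g) = negLap f + negLap g := by
  have e : fderiv ℝ (f + g) = fderiv ℝ f + fderiv ℝ g := by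
    ext1 x
    exact fderiv_add (hf.differentiable (by norm_num) x) (hg.differentiable (by norm_num) x)
  have hf' : Differentiable ℝ (fderiv ℝ f) :=
    (hf.fderiv_right (m := 1) (by norm_num)).differentiable (by norm_num)
  have hg' : Differentiable ℝ (fderiv ℝ g) :=
    (hg.fderiv_right (m := 1) (by norm_num)).differentiable (by norm_num)
  ext x
  simp only [negLap, e, fderiv_add (hf' x) (hg' x), Pi.add_apply, ContinuousLinearMap.add_apply,
    Finset.sum_add_distrib]
  ring

lemma negLap_smul (c : ℝ) {f : EuclideanSpace ℝ (Fin n) → ℝ} (hf : ContDiff ℝ 2 f) :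
    negLap (c • f) = c • negLap f := by
  have e : fderiv ℝ (c • f) = c • fderiv ℝ f := by
    ext1 x
    exact fderiv_const_smul (hf.differentiable (by norm_num) x) c
  have hf' : Differentiable ℝ (fderiv ℝ f) :=
    (hf.fderiv_right (m := 1) (by norm_num)).differentiable (by norm_num)
  ext x
  simp only [negLap, e, fderiv_const_smul (hf' x), Pi.smul_apply, ContinuousLinearMap.smul_apply,
    ← Finset.smul_sum, smul_neg]

lemma negLap_mem {b : ℝ} {f : EuclideanSpace ℝ (Fin n) → ℝ} (hf : f ∈ jbSpan n b) :
    ContDiff ℝ 2 f ∧ negLap f ∈ jbSpan n b := by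
  induction hf using Submodule.span_induction with
  | mem f h =>
    obtain ⟨p, hp, rfl⟩ := h
    refine ⟨jb_contDiff p, ?_⟩
    rw [jb_negLap]
    refine Submodule.add_mem _ (Submodule.smul_mem _ _ (Submodule.subset_span ?_))
      (Submodule.smul_mem _ _ (Submodule.subset_span ?_))
    · exact ⟨p - 1, by linarith, rfl⟩
    · exact ⟨p - 2, by linarith, rfl⟩
  | zero =>
    refine ⟨contDiff_const, ?_⟩
    have := negLap_smul (n := n) 0 (f := 0) contDiff_const
    rw [zero_smul, zero_smul] at this
    rw [this]
    exact Submodule.zero_mem _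
  | add f g _ _ hf hg =>
    refine ⟨hf.1.add hg.1, ?_⟩
    rw [negLap_add hf.1 hg.1]
    exact Submodule.add_mem _ hf.2 hg.2
  | smul c f _ hf =>
    refine ⟨hf.1.const_smul c, ?_⟩
    rw [negLap_smul c hf.1]
    exact Submodule.smul_mem _ _ hf.2

lemma iter_mem {b : ℝ} {f : EuclideanSpace ℝ (Fin n) → ℝ} (hf : f ∈ jbSpan n b) (m : ℕ) :
    negLap^[m] f ∈ jbSpan n b := by
  induction m with
  | zero => exact hf
  | succ m ih =>
    rw [Function.iterate_succ_apply']
    exact (negLap_mem ih).2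

lemma second_diff (g g' g'' : ℝ → ℝ) (K : ℝ)
    (h1 : ∀ t, HasDerivAt g (g' t) t) (h2 : ∀ t, HasDerivAt g' (g'' t) t)
    (hK : ∀ t ∈ Icc (-1:ℝ) 1, |g'' t| ≤ K) : |2 * g 0 - g 1 - g (-1)| ≤ 2 * K := by
  have a1 : ∀ t ∈ Icc (0:ℝ) 1, |g' t - g' (-t)| ≤ 2 * K := by
    intro t ht
    have := (convex_Icc (-1:ℝ) 1).norm_image_sub_le_of_norm_hasDerivWithin_le (f := g') (f' := g'')
      (C := K) (x := -t) (y := t) (fun u _ => (h2 u).hasDerivWithinAt) (fun u hu => hK u hu)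
      ⟨by linarith [ht.2], by linarith [ht.1]⟩ ⟨by linarith [ht.1], ht.2⟩
    simp only [Real.norm_eq_abs] at this
    have K0 : 0 ≤ K := (abs_nonneg _).trans (hK 0 (by norm_num))
    refine this.trans ?_
    rw [abs_of_nonneg (by linarith [ht.1])]
    nlinarith [ht.2]
  have := (convex_Icc (0:ℝ) 1).norm_image_sub_le_of_norm_hasDerivWithin_le
      (f := fun t => g t + g (-t)) (f' := fun t => g' t - g' (-t))
      (C := 2 * K) (x := 0) (y := 1) (fun u _ => by
        have := (h1 u).add ((h1 (-u)).comp u (hasDerivAt_neg u))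
        refine (this.congr_deriv ?_).hasDerivWithinAt
        ring) (fun u hu => a1 u hu) (by norm_num) (by norm_num)
  simp only [Real.norm_eq_abs, sub_zero, abs_one, mul_one, neg_zero] at this
  rw [abs_sub_comm] at this
  convert this using 2
  ring

lemma jb_second_diff (p : ℝ) (hp : p ≤ 0) (x y : EuclideanSpace ℝ (Fin n))
    (hy : ‖y‖ ≤ √(1 + ‖x‖ ^ 2) / 2) :
    |2 * jb n p x - jb n p (x + y) - jb n p (x - y)| ≤
      2 * ((4 * |p * (p - 1)| + 2 * |p|) * 4 ^ (1 - p) * jb n (p - 1) x * ‖y‖ ^ 2) := by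
  set h : ℝ → ℝ := fun t => 1 + ‖x + t • y‖ ^ 2 with hh
  set h' : ℝ → ℝ := fun t => 2 * inner ℝ (x + t • y) y with hh'
  have hpos : ∀ t, 0 < h t := fun t => by simp only [hh]; positivity
  have d0 : ∀ t : ℝ, HasDerivAt (fun t : ℝ => x + t • y) y t := fun t => by
    simpa using ((hasDerivAt_id t).smul_const y).const_add x
  have d1 : ∀ t, HasDerivAt h (h' t) t := fun t => by
    exact (d0 t).norm_sq.const_add 1
  have d2 : ∀ t, HasDerivAt h' (2 * ‖y‖ ^ 2) t := fun t => by
    have := ((d0 t).inner ℝ (hasDerivAt_const t y)).const_mul 2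
    simpa [hh', real_inner_self_eq_norm_sq] using this
  have e1 : ∀ t, HasDerivAt (fun t => h t ^ p) (h' t * p * h t ^ (p - 1)) t := fun t =>
    (d1 t).rpow_const (Or.inl (hpos t).ne')
  have e2 : ∀ t, HasDerivAt (fun t => h' t * p * h t ^ (p - 1))
      (2 * ‖y‖ ^ 2 * p * h t ^ (p - 1) + h' t * p * (h' t * (p - 1) * h t ^ (p - 1 - 1))) t :=
    fun t => ((d2 t).mul_const p).mul ((d1 t).rpow_const (Or.inl (hpos t).ne'))
  have key := second_diff (fun t => h t ^ p) _ _
    ((4 * |p * (p - 1)| + 2 * |p|) * 4 ^ (1 - p) * jb n (p - 1) x * ‖y‖ ^ 2) e1 e2 ?_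
  · convert key using 2
    simp [hh, jb, sub_eq_add_neg]
  intro t ht
  have ht1 : |t| ≤ 1 := abs_le.2 ht
  have b1 : h' t ^ 2 ≤ 4 * (h t * ‖y‖ ^ 2) := by
    have := abs_real_inner_le_norm (x + t • y) y
    have h3 : (inner ℝ (x + t • y) y) ^ 2 ≤ (‖x + t • y‖ * ‖y‖) ^ 2 := sq_le_sq.2 (by
      rwa [abs_of_nonneg (by positivity : 0 ≤ ‖x + t • y‖ * ‖y‖)])
    simp only [hh', hh]
    nlinarith [sq_nonneg ‖y‖]
  have b2 : h t ^ (p - 1 - 1) * h t = h t ^ (p - 1) := by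
    rw [← Real.rpow_add_one (hpos t).ne']
    congr 1
    ring
  have b3 : (1 + ‖x‖ ^ 2) / 4 ≤ h t := by
    have hs : √(1 + ‖x‖ ^ 2) ^ 2 = 1 + ‖x‖ ^ 2 := Real.sq_sqrt (by positivity)
    set r := √(1 + ‖x‖ ^ 2)
    have hr : 0 ≤ r := Real.sqrt_nonneg _
    have n1 : ‖x‖ ≤ ‖x + t • y‖ + r / 2 := by
      have : ‖t • y‖ ≤ r / 2 := by
        rw [norm_smul, Real.norm_eq_abs]
        nlinarith [norm_nonneg y]
      have h4 : ‖x‖ ≤ ‖x + t • y‖ + ‖t • y‖ := by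
        simpa using norm_sub_le (x + t • y) (t • y)
      linarith
    simp only [hh]
    have hw := norm_nonneg (x + t • y)
    set w := ‖x + t • y‖
    have : r ≤ √(1 + w ^ 2) + r / 2 := by
      have hv : √(1 + w ^ 2) ^ 2 = 1 + w ^ 2 := Real.sq_sqrt (by positivity)
      have hv0 : 0 ≤ √(1 + w ^ 2) := Real.sqrt_nonneg _
      have hv1 : w ≤ √(1 + w ^ 2) := Real.le_sqrt_of_sq_le (by linarith)
      refine abs_le_of_sq_le_sq' ?_ (by positivity) |>.2
      have hx0 := norm_nonneg x
      have : ‖x‖ ^ 2 ≤ (w + r / 2) ^ 2 := by gcongr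
      nlinarith
    have h5 : (r / 2) ^ 2 ≤ √(1 + w ^ 2) ^ 2 := by
      gcongr
      linarith
    rw [Real.sq_sqrt (by positivity)] at h5
    linarith
  have b4 : h t ^ (p - 1) ≤ 4 ^ (1 - p) * jb n (p - 1) x := by
    refine (Real.rpow_le_rpow_of_nonpos (by positivity) b3 (by linarith)).trans ?_
    rw [Real.div_rpow (by positivity) (by norm_num)]
    have : (4:ℝ) ^ (1 - p) = (4 ^ (p - 1))⁻¹ := by
      rw [← Real.rpow_neg (by norm_num)]
      congr 1
      ring
    rw [this, div_eq_inv_mul, jb]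
  have hp1 : 0 < h t ^ (p - 1 - 1) := Real.rpow_pos_of_pos (hpos t) _
  calc _ ≤ |2 * ‖y‖ ^ 2 * p * h t ^ (p - 1)| + |h' t * p * (h' t * (p - 1) * h t ^ (p - 1 - 1))| :=
        abs_add_le _ _
    _ = 2 * |p| * ‖y‖ ^ 2 * h t ^ (p - 1) + |p * (p - 1)| * h t ^ (p - 1 - 1) * h' t ^ 2 := by
        congr 1
        · rw [abs_mul, abs_mul, abs_of_nonneg (by positivity : 0 ≤ 2 * ‖y‖ ^ 2),
            abs_of_pos (Real.rpow_pos_of_pos (hpos t) _)]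
          ring
        · rw [show h' t * p * (h' t * (p - 1) * h t ^ (p - 1 - 1)) =
            (p * (p - 1)) * (h t ^ (p - 1 - 1) * h' t ^ 2) by ring, abs_mul,
            abs_of_nonneg (by positivity : 0 ≤ h t ^ (p - 1 - 1) * h' t ^ 2)]
          ring
    _ ≤ 2 * |p| * ‖y‖ ^ 2 * h t ^ (p - 1) + |p * (p - 1)| * h t ^ (p - 1 - 1) *
          (4 * (h t * ‖y‖ ^ 2)) := by gcongr
    _ = (4 * |p * (p - 1)| + 2 * |p|) * (h t ^ (p - 1)) * ‖y‖ ^ 2 := by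
        rw [← b2]
        ring
    _ ≤ (4 * |p * (p - 1)| + 2 * |p|) * (4 ^ (1 - p) * jb n (p - 1) x) * ‖y‖ ^ 2 := by gcongr
    _ = _ := by ring

end aux

section integrals
open Set
variable {n : ℕ}

lemma inner_int (hn : 1 ≤ n) (s : ℝ) (hs1 : s < 1) : ∃ A ≥ (0:ℝ), ∀ R > (0:ℝ),
    Integrable (fun y : EuclideanSpace ℝ (Fin n) =>
      (Ioc 0 R).indicator (fun r : ℝ => r ^ (2 - (n:ℝ) - 2 * s)) ‖y‖) ∧
    ∫ y : EuclideanSpace ℝ (Fin n),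
      (Ioc 0 R).indicator (fun r : ℝ => r ^ (2 - (n:ℝ) - 2 * s)) ‖y‖ = A * R ^ (2 - 2 * s) := by
  haveI : Nonempty (Fin n) := ⟨⟨0, hn⟩⟩
  haveI : Nontrivial (EuclideanSpace ℝ (Fin n)) := inferInstance
  refine ⟨n * (volume.real (Metric.ball (0 : EuclideanSpace ℝ (Fin n)) 1) * (2 - 2 * s)⁻¹), ?_, ?_⟩
  · have : 0 ≤ 2 - 2 * s := by linarith
    positivity
  intro R hR
  have e : ∀ y ∈ Ioi (0:ℝ), y ^ (n - 1) • (Ioc 0 R).indicator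
      (fun r : ℝ => r ^ (2 - (n:ℝ) - 2 * s)) y =
      (Ioc 0 R).indicator (fun r : ℝ => r ^ (1 - 2 * s)) y := by
    intro y hy
    have hy : 0 < y := hy
    by_cases h : y ∈ Ioc 0 R
    · rw [indicator_of_mem h, indicator_of_mem h, smul_eq_mul, ← Real.rpow_natCast,
        ← Real.rpow_add hy]
      congr 1
      push_cast [hn]
      ring
    · simp [indicator_of_notMem h]
  have hsub : Ioi (0:ℝ) ∩ Ioc 0 R = Ioc 0 R := by
    ext y
    simp only [mem_inter_iff, mem_Ioi, mem_Ioc]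
    tauto
  constructor
  · rw [integrable_fun_norm_addHaar, finrank_euclideanSpace_fin,
      integrableOn_congr_fun e measurableSet_Ioi]
    have := (intervalIntegral.intervalIntegrable_rpow' (a := 0) (b := R)
      (r := 1 - 2 * s) (by linarith)).1
    exact ((integrable_indicator_iff measurableSet_Ioc).2 this).integrableOn
  · rw [integral_fun_norm_addHaar, finrank_euclideanSpace_fin,
      setIntegral_congr_fun measurableSet_Ioi e, setIntegral_indicator measurableSet_Ioc, hsub,
      ← intervalIntegral.integral_of_le hR.le, integral_rpow (Or.inl (by linarith)),
      Real.zero_rpow (by linarith)]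
    simp only [nsmul_eq_mul, smul_eq_mul]
    rw [show 1 - 2 * s + 1 = 2 - 2 * s by ring]
    ring

lemma outer_int (hn : 1 ≤ n) (s : ℝ) (hs0 : 0 < s) : ∃ A ≥ (0:ℝ), ∀ R > (0:ℝ),
    Integrable (fun y : EuclideanSpace ℝ (Fin n) =>
      (Ioi R).indicator (fun r : ℝ => r ^ (-(n:ℝ) - 2 * s)) ‖y‖) ∧
    ∫ y : EuclideanSpace ℝ (Fin n),
      (Ioi R).indicator (fun r : ℝ => r ^ (-(n:ℝ) - 2 * s)) ‖y‖ = A * R ^ (-(2 * s)) := by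
  haveI : Nonempty (Fin n) := ⟨⟨0, hn⟩⟩
  haveI : Nontrivial (EuclideanSpace ℝ (Fin n)) := inferInstance
  refine ⟨n * (volume.real (Metric.ball (0 : EuclideanSpace ℝ (Fin n)) 1) * (2 * s)⁻¹), ?_, ?_⟩
  · positivity
  intro R hR
  have e : ∀ y ∈ Ioi (0:ℝ), y ^ (n - 1) • (Ioi R).indicator
      (fun r : ℝ => r ^ (-(n:ℝ) - 2 * s)) y =
      (Ioi R).indicator (fun r : ℝ => r ^ (-1 - 2 * s)) y := by
    intro y hy
    have hy : 0 < y := hy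
    by_cases h : y ∈ Ioi R
    · rw [indicator_of_mem h, indicator_of_mem h, smul_eq_mul, ← Real.rpow_natCast,
        ← Real.rpow_add hy]
      congr 1
      push_cast [hn]
      ring
    · simp [indicator_of_notMem h]
  have hsub : Ioi (0:ℝ) ∩ Ioi R = Ioi R := by
    ext y
    simp only [mem_inter_iff, mem_Ioi]
    exact ⟨fun h => h.2, fun h => ⟨hR.trans h, h⟩⟩
  constructor
  · rw [integrable_fun_norm_addHaar, finrank_euclideanSpace_fin,
      integrableOn_congr_fun e measurableSet_Ioi]
    have := integrableOn_Ioi_rpow_of_lt (a := -1 - 2 * s) (by linarith) hR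
    exact ((integrable_indicator_iff measurableSet_Ioi).2 this).integrableOn
  · rw [integral_fun_norm_addHaar, finrank_euclideanSpace_fin,
      setIntegral_congr_fun measurableSet_Ioi e, setIntegral_indicator measurableSet_Ioi, hsub,
      integral_Ioi_rpow_of_lt (by linarith) hR]
    simp only [nsmul_eq_mul, smul_eq_mul]
    rw [show -1 - 2 * s + 1 = -(2 * s) by ring, neg_div_neg_eq]
    ring

/-- the claimed conclusion, as a property of `F` -/
def FracBound (n : ℕ) (s : ℝ) (F : EuclideanSpace ℝ (Fin n) → ℝ) : Prop :=
  ∃ C > (0:ℝ), ∀ x : EuclideanSpace ℝ (Fin n),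
      Integrable (fun y : EuclideanSpace ℝ (Fin n) =>
        (2 * F x - F (x + y) - F (x - y)) * ‖y‖ ^ (-(n : ℝ) - 2 * s)) ∧
      |∫ y : EuclideanSpace ℝ (Fin n),
          (2 * F x - F (x + y) - F (x - y)) * ‖y‖ ^ (-(n : ℝ) - 2 * s)|
        ≤ C * (1 + ‖x‖ ^ 2) ^ (-((n : ℝ) + 2 * s) / 2)

lemma fracBound_jb (hn : 1 ≤ n) (s : ℝ) (hs0 : 0 < s) (hs1 : s < 1) (p : ℝ)
    (hp : p < -(n:ℝ) / 2) : FracBound n s (jb n p) := by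
  obtain ⟨A, hA, hAi⟩ := inner_int hn s hs1
  obtain ⟨B, hB, hBi⟩ := outer_int hn s hs0
  have hn0 : (0:ℝ) ≤ n := Nat.cast_nonneg n
  have hp0 : p ≤ 0 := by linarith
  have hI : Integrable (jb n p) := by
    have := integrable_rpow_neg_one_add_norm_sq (E := EuclideanSpace ℝ (Fin n))
      (μ := volume) (r := -2 * p) (by rw [finrank_euclideanSpace_fin]; linarith)
    refine this.congr (Filter.Eventually.of_forall fun x => ?_)
    simp only [jb]
    congr 1
    ring
  have jpos : ∀ p x, 0 < jb n p x := fun p x => by unfold jb; positivity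
  have hc : Continuous (jb n p) := (jb_contDiff p).continuous
  set I := ∫ y, jb n p y with hIdef
  have hI0 : 0 ≤ I := integral_nonneg fun y => (jpos _ _).le
  set K := 2 * ((4 * |p * (p - 1)| + 2 * |p|) * 4 ^ (1 - p)) with hK
  have hK0 : 0 ≤ K := by positivity
  refine ⟨K * A * 2⁻¹ ^ (2 - 2 * s) + 2 * B * 2⁻¹ ^ (-(2 * s)) +
    2 * I * 2⁻¹ ^ (-(n:ℝ) - 2 * s) + 1, by positivity, fun x => ?_⟩
  set J := 1 + ‖x‖ ^ 2 with hJ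
  have hJ1 : 1 ≤ J := by simp only [hJ]; nlinarith [sq_nonneg ‖x‖]
  have hJ0 : 0 < J := by linarith
  set R := √J / 2 with hRdef
  have hR : 0 < R := by positivity
  have hRpow : ∀ a : ℝ, R ^ a = J ^ (a / 2) * 2⁻¹ ^ a := fun a => by
    rw [hRdef, div_eq_mul_inv, Real.mul_rpow (Real.sqrt_nonneg _) (by norm_num),
      Real.sqrt_eq_rpow, ← Real.rpow_mul hJ0.le]
    congr 2
    ring
  set g : EuclideanSpace ℝ (Fin n) → ℝ := fun y =>
    K * jb n (p - 1) x * (Ioc 0 R).indicator (fun r : ℝ => r ^ (2 - (n:ℝ) - 2 * s)) ‖y‖ +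
    2 * jb n p x * (Ioi R).indicator (fun r : ℝ => r ^ (-(n:ℝ) - 2 * s)) ‖y‖ +
    R ^ (-(n:ℝ) - 2 * s) * (jb n p (x + y) + jb n p (x - y)) with hg
  have i1 := (hAi R hR).1.const_mul (K * jb n (p - 1) x)
  have i2 := (hBi R hR).1.const_mul (2 * jb n p x)
  have ia : Integrable (fun y => jb n p (x + y)) := hI.comp_add_left x
  have ib : Integrable (fun y => jb n p (x - y)) := hI.comp_sub_left x
  have i3 := (ia.add ib).const_mul (R ^ (-(n:ℝ) - 2 * s))
  have gi : Integrable g := (i1.add i2).add i3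
  have gint : ∫ y, g y = K * jb n (p - 1) x * (A * R ^ (2 - 2 * s)) +
      2 * jb n p x * (B * R ^ (-(2 * s))) + R ^ (-(n:ℝ) - 2 * s) * (I + I) := by
    have e1 : ∫ y, g y = _ := integral_add (i1.add i2) i3
    have e2 := integral_add i1 i2
    have e3 := integral_add ia ib
    have e4 : ∫ y, jb n p (x + y) = I := integral_add_left_eq_self _ x
    have e5 : ∫ y, jb n p (x - y) = I := integral_sub_left_eq_self _ volume x
    rw [e4, e5] at e3
    rw [e1, e2, integral_const_mul, integral_const_mul, integral_const_mul, e3, (hAi R hR).2,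
      (hBi R hR).2]
  have hle : ∀ y, ‖(2 * jb n p x - jb n p (x + y) - jb n p (x - y)) *
      ‖y‖ ^ (-(n : ℝ) - 2 * s)‖ ≤ g y := by
    intro y
    have t3 : 0 ≤ R ^ (-(n:ℝ) - 2 * s) * (jb n p (x + y) + jb n p (x - y)) := by
      have := jpos p (x + y)
      have := jpos p (x - y)
      positivity
    rw [norm_mul, Real.norm_eq_abs, Real.norm_eq_abs,
      abs_of_nonneg (by positivity : 0 ≤ ‖y‖ ^ (-(n : ℝ) - 2 * s))]
    rcases eq_or_ne y 0 with rfl | hy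
    · have : (2 * jb n p x - jb n p (x + 0) - jb n p (x - 0)) = 0 := by
        simp only [add_zero, sub_zero]
        ring
      rw [this]
      simp only [hg, norm_zero]
      simp only [add_zero, sub_zero, abs_zero, zero_mul] at t3 ⊢
      simpa [hR.le, not_lt.2 hR.le] using t3
    have hy0 : 0 < ‖y‖ := norm_pos_iff.2 hy
    rcases le_or_gt ‖y‖ R with h | h
    · have m1 : ‖y‖ ∈ Ioc 0 R := ⟨hy0, h⟩
      have m2 : ‖y‖ ∉ Ioi R := not_lt.2 h
      simp only [hg, indicator_of_mem m1, indicator_of_notMem m2]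
      have key := jb_second_diff p hp0 x y h
      have e : ‖y‖ ^ (2 - (n:ℝ) - 2 * s) = ‖y‖ ^ 2 * ‖y‖ ^ (-(n : ℝ) - 2 * s) := by
        rw [← Real.rpow_natCast, ← Real.rpow_add hy0]
        congr 1
        push_cast
        ring
      have := mul_le_mul_of_nonneg_right key (by positivity : 0 ≤ ‖y‖ ^ (-(n : ℝ) - 2 * s))
      rw [e]
      refine this.trans ?_
      simp only [hK]
      linarith
    · have m1 : ‖y‖ ∉ Ioc 0 R := fun h' => not_le.2 h h'.2
      have m2 : ‖y‖ ∈ Ioi R := h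
      simp only [hg, indicator_of_mem m2, indicator_of_notMem m1]
      have b : ‖y‖ ^ (-(n : ℝ) - 2 * s) ≤ R ^ (-(n : ℝ) - 2 * s) :=
        Real.rpow_le_rpow_of_nonpos hR h.le (by linarith)
      have ab : |2 * jb n p x - jb n p (x + y) - jb n p (x - y)| ≤
          2 * jb n p x + (jb n p (x + y) + jb n p (x - y)) := by
        have h1 := jpos p x
        have h2 := jpos p (x + y)
        have h3 := jpos p (x - y)
        rw [abs_le]
        constructor <;> linarith
      have h4 : 0 ≤ ‖y‖ ^ (-(n : ℝ) - 2 * s) := by positivity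
      have h5 : 0 ≤ jb n p (x + y) + jb n p (x - y) := (add_pos (jpos _ _) (jpos _ _)).le
      have := mul_le_mul_of_nonneg_right ab h4
      nlinarith [mul_le_mul_of_nonneg_right b h5]
  have hmeas : AEStronglyMeasurable (fun y => (2 * jb n p x - jb n p (x + y) - jb n p (x - y)) *
      ‖y‖ ^ (-(n : ℝ) - 2 * s)) volume := by
    have : Measurable (jb n p) := hc.measurable
    exact Measurable.aestronglyMeasurable (by fun_prop)
  refine ⟨gi.mono' hmeas (Filter.Eventually.of_forall hle), ?_⟩
  have := norm_integral_le_of_norm_le gi (Filter.Eventually.of_forall hle)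
  rw [Real.norm_eq_abs, gint] at this
  refine this.trans ?_
  have jJ : ∀ p, jb n p x = J ^ p := fun p => rfl
  rw [hRpow, hRpow, hRpow, jJ, jJ]
  have c0 : J ^ (p - s) ≤ J ^ (-((n : ℝ) + 2 * s) / 2) :=
    Real.rpow_le_rpow_of_exponent_le hJ1 (by linarith)
  have c1 : J ^ (p - 1) * J ^ ((2 - 2 * s) / 2) = J ^ (p - s) := by
    rw [← Real.rpow_add hJ0]
    congr 1
    ring
  have c2 : J ^ p * J ^ (-(2 * s) / 2) = J ^ (p - s) := by
    rw [← Real.rpow_add hJ0]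
    congr 1
    ring
  have c3 : J ^ ((-(n:ℝ) - 2 * s) / 2) = J ^ (-((n : ℝ) + 2 * s) / 2) := by
    congr 1
    ring
  have c4 : 0 ≤ J ^ (-((n : ℝ) + 2 * s) / 2) := by positivity
  calc _ = (K * A * 2⁻¹ ^ (2 - 2 * s)) * (J ^ (p - 1) * J ^ ((2 - 2 * s) / 2)) +
      (2 * B * 2⁻¹ ^ (-(2 * s))) * (J ^ p * J ^ (-(2 * s) / 2)) +
      2 * I * 2⁻¹ ^ (-(n:ℝ) - 2 * s) * J ^ ((-(n:ℝ) - 2 * s) / 2) := by ring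
    _ ≤ (K * A * 2⁻¹ ^ (2 - 2 * s)) * J ^ (-((n : ℝ) + 2 * s) / 2) +
      (2 * B * 2⁻¹ ^ (-(2 * s))) * J ^ (-((n : ℝ) + 2 * s) / 2) +
      2 * I * 2⁻¹ ^ (-(n:ℝ) - 2 * s) * J ^ (-((n : ℝ) + 2 * s) / 2) := by
        rw [c1, c2, c3]
        gcongr
    _ ≤ _ := by linarith

lemma fracBound_span (hn : 1 ≤ n) (s : ℝ) (hs0 : 0 < s) (hs1 : s < 1) (b : ℝ)
    (hb : b < -(n:ℝ) / 2) (F : EuclideanSpace ℝ (Fin n) → ℝ) (hF : F ∈ jbSpan n b) :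
    FracBound n s F := by
  induction hF using Submodule.span_induction with
  | mem f h =>
    obtain ⟨p, hp, rfl⟩ := h
    exact fracBound_jb hn s hs0 hs1 p (by linarith)
  | zero =>
    refine ⟨1, one_pos, fun x => ⟨by simp, ?_⟩⟩
    simp
    positivity
  | add f g _ _ hf hg =>
    obtain ⟨C, hC, hf⟩ := hf
    obtain ⟨D, hD, hg⟩ := hg
    refine ⟨C + D, by positivity, fun x => ?_⟩
    have e : (fun y => (2 * (f + g) x - (f + g) (x + y) - (f + g) (x - y)) *
        ‖y‖ ^ (-(n : ℝ) - 2 * s)) =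
        fun y => (2 * f x - f (x + y) - f (x - y)) * ‖y‖ ^ (-(n : ℝ) - 2 * s) +
          (2 * g x - g (x + y) - g (x - y)) * ‖y‖ ^ (-(n : ℝ) - 2 * s) := by
      ext y
      simp only [Pi.add_apply]
      ring
    rw [e]
    refine ⟨(hf x).1.add (hg x).1, ?_⟩
    rw [integral_add (hf x).1 (hg x).1, add_mul]
    exact (abs_add_le _ _).trans (add_le_add (hf x).2 (hg x).2)
  | smul c f _ hf =>
    obtain ⟨C, hC, hf⟩ := hf
    refine ⟨(|c| + 1) * C, by positivity, fun x => ?_⟩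
    have e : (fun y => (2 * (c • f) x - (c • f) (x + y) - (c • f) (x - y)) *
        ‖y‖ ^ (-(n : ℝ) - 2 * s)) =
        fun y => c * ((2 * f x - f (x + y) - f (x - y)) * ‖y‖ ^ (-(n : ℝ) - 2 * s)) := by
      ext y
      simp only [Pi.smul_apply, smul_eq_mul]
      ring
    rw [e]
    refine ⟨(hf x).1.const_mul c, ?_⟩
    rw [integral_const_mul, abs_mul, mul_assoc]
    exact mul_le_mul (by linarith) (hf x).2 (abs_nonneg _) (by positivity)

end integrals

/-- Pointwise bound `|(-Δ)^σ ⟨·⟩^{-q}(x)| ≲ ⟨x⟩^{-n-2s}` for non-integer `σ > 0` with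
integer part `m = ⌊σ⌋` and fractional part `s = σ - m ∈ (0,1)`: the singular-integral
representation of `(-Δ)^s` applied to `F = (-Δ)^m ⟨·⟩^{-q}` is bounded by `C ⟨x⟩^{-n-2s}`. -/
theorem fractional_laplacian_iterated_japanese_bracket_bound
    (n : ℕ) (hn : 1 ≤ n) (q : ℝ) (hq : (n : ℝ) < q)
    (σ : ℝ) (hσ : 0 < σ) (m : ℕ) (hm : m = ⌊σ⌋₊)
    (s : ℝ) (hs : s = σ - (m : ℝ)) (hs01 : s ∈ Set.Ioo (0:ℝ) 1)
    (F : EuclideanSpace ℝ (Fin n) → ℝ)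
    (hF : F = negLap^[m] (fun y : EuclideanSpace ℝ (Fin n) => (1 + ‖y‖ ^ 2) ^ (-q / 2))) :
    ∃ C > (0:ℝ), ∀ x : EuclideanSpace ℝ (Fin n),
      Integrable (fun y : EuclideanSpace ℝ (Fin n) =>
        (2 * F x - F (x + y) - F (x - y)) * ‖y‖ ^ (-(n : ℝ) - 2 * s)) ∧
      |∫ y : EuclideanSpace ℝ (Fin n),
          (2 * F x - F (x + y) - F (x - y)) * ‖y‖ ^ (-(n : ℝ) - 2 * s)|
        ≤ C * (1 + ‖x‖ ^ 2) ^ (-((n : ℝ) + 2 * s) / 2) := by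
  subst hF
  refine fracBound_span hn s hs01.1 hs01.2 (-q / 2) (by linarith) _ (iter_mem ?_ m)
  exact Submodule.subset_span ⟨-q / 2, le_rfl, rfl⟩
end
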